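/- Let A be an n×n real matrix and C an m×n real matrix such that the pair (A, C) is completely observable. Then there exists a constant c > 0, depending only on A and C, such that for every absolutely continuous z : [0,1] → ℝ^n with integrable f = ż − A z, and every φ ∈ W^{n,1}([0,1], ℝ^n), one has ∫₀¹ |z(t)| dt ≤ c ( ∫₀¹ |C z(t)| dt + ∫₀¹ |f(t) − φ(t)| dt + |φ|_n ), where |φ|_n = Σ_{j=0}^n ∫₀¹ |φ^{(j)}(t)| dt. -/

import Mathlib

/-!
Since `|φ|_n` contains the term `∫ ‖φ‖`, the triangle inequality `‖f‖ ≤ ‖f - φ‖ + ‖φ‖` reduces the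
estimate to `∫ ‖z‖ ≤ c (∫ ‖C z‖ + ∫ ‖f‖)`.

Compare `z` with the free motion `y t = exp (t A) z₀` issued from `z₀ = z 0`. Grönwall's inequality
bounds `z` by a multiple of `‖z₀‖ + ∫ ‖f‖`, and `z - y`, which is driven by the same forcing but
starts at `0`, by a multiple of `∫ ‖f‖`. By observability the linear map sending `z₀` to the output
`C y` in `L¹` is injective, hence bounded below in finite dimension, so that `‖z₀‖` is at most a
multiple of `∫ ‖C y‖ ≤ ∫ ‖C z‖ + ‖C‖ ∫ ‖z - y‖`.
-/

open MeasureTheory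

/-- The pair `(A, C)` is completely observable: the only vector `v` with
`C A^k v = 0` for all `k = 0, …, n-1` is `v = 0`. -/
def CompletelyObservable (n m : ℕ) (A : Matrix (Fin n) (Fin n) ℝ)
    (C : Matrix (Fin m) (Fin n) ℝ) : Prop :=
  ∀ v : Fin n → ℝ, (∀ k < n, (C * A ^ k).mulVec v = 0) → v = 0

open Set
open NormedSpace (exp)
open scoped Topology

theorem le_mul_exp_of_le_add_mul_integral {u : ℝ → ℝ} {a b ε K : ℝ} (hK : 0 ≤ K)
    (hu : ContinuousOn u (Icc a b))
    (hle : ∀ t ∈ Icc a b, u t ≤ ε + K * ∫ s in a..t, u s) :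
    ∀ t ∈ Icc a b, u t ≤ ε * Real.exp (K * (t - a)) := by
  -- The right-hand side `g` of the hypothesis satisfies `g' = K u ≤ K g` and `g a = ε`.
  set g : ℝ → ℝ := fun t ↦ ε + K * ∫ s in a..t, u s with hg
  have deriv_g : ∀ t ∈ Icc a b, HasDerivWithinAt g (K * u t) (Icc a b) t := by
    intro t ht
    have : Fact (t ∈ Icc a b) := ⟨ht⟩
    have hut : IntervalIntegrable u volume a t :=
      (hu.mono (Icc_subset_Icc_right ht.2)).intervalIntegrable_of_Icc ht.1
    exact ((intervalIntegral.integral_hasDerivWithinAt_right hut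
      (hu.stronglyMeasurableAtFilter_nhdsWithin measurableSet_Icc t) (hu t ht)).const_mul
      K).const_add ε
  have g_le : ∀ t ∈ Icc a b, g t ≤ gronwallBound ε K 0 (t - a) := by
    refine le_gronwallBound_of_liminf_deriv_right_le (f' := fun t ↦ K * u t)
      (fun t ht ↦ (deriv_g t ht).continuousWithinAt) (fun t ht r hr ↦ ?_) (by simp [hg])
      (fun t ht ↦ ?_)
    · exact ((deriv_g t (Ico_subset_Icc_self ht)).mono_of_mem_nhdsWithin
        (Icc_mem_nhdsGE_of_mem ht)).liminf_right_slope_le hr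
    · simpa using mul_le_mul_of_nonneg_left (hle t (Ico_subset_Icc_self ht)) hK
  intro t ht
  simpa only [gronwallBound_ε0] using (hle t ht).trans (g_le t ht)

theorem integral_norm_le_integral_norm_sub_add {α E : Type*} [MeasurableSpace α] {μ : Measure α}
    [NormedAddCommGroup E] {f g : α → E} (hf : Integrable f μ) (hg : Integrable g μ) :
    ∫ x, ‖f x‖ ∂μ ≤ (∫ x, ‖f x - g x‖ ∂μ) + ∫ x, ‖g x‖ ∂μ := by
  have hfg : Integrable (fun x ↦ ‖f x - g x‖) μ := (hf.sub hg).norm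
  rw [← integral_add hfg hg.norm]
  exact integral_mono hf.norm (hfg.add hg.norm) fun x ↦ norm_le_norm_sub_add (f x) (g x)

section LinearSystem

variable {E F : Type*} [NormedAddCommGroup E] [NormedSpace ℝ E]
  [NormedAddCommGroup F] [NormedSpace ℝ F] {L : E →L[ℝ] E} {C : E →L[ℝ] F}

/-- Complete observability of the linear system `ż = L z` with output `C z`: no nonzero state is
annihilated by all `C L ^ k`. All powers are allowed, as suits arbitrary `E`; when `E` has
dimension `n`, those with `k < n` suffice by the Cayley–Hamilton theorem. -/
def IsObservable (L : E →L[ℝ] E) (C : E →L[ℝ] F) : Prop :=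
  ∀ v, (∀ k : ℕ, C ((L ^ k) v) = 0) → v = 0

/-- `z` is an absolutely continuous solution of `ż = L z + f` on `[0, T]` with integrable forcing
`f`. The equation is encoded in integrated form. -/
structure IsForcedTrajectoryOn (L : E →L[ℝ] E) (f z : ℝ → E) (T : ℝ) : Prop where
  continuousOn : ContinuousOn z (Icc 0 T)
  integrableOn : IntegrableOn f (Icc 0 T)
  eq_add_integral : ∀ t ∈ Icc 0 T, z t = z 0 + ∫ s in (0 : ℝ)..t, (L (z s) + f s)

namespace IsForcedTrajectoryOn

variable {f g y z : ℝ → E} {T t : ℝ}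

theorem intervalIntegrable_forcing (hz : IsForcedTrajectoryOn L f z T) (ht : t ∈ Icc 0 T) :
    IntervalIntegrable f volume 0 t :=
  (hz.integrableOn.mono_set (uIcc_of_le ht.1 ▸ Icc_subset_Icc_right ht.2)).intervalIntegrable

theorem continuousOn_uIcc (hz : IsForcedTrajectoryOn L f z T) (ht : t ∈ Icc 0 T) :
    ContinuousOn z (uIcc 0 t) :=
  hz.continuousOn.mono (uIcc_of_le ht.1 ▸ Icc_subset_Icc_right ht.2)

theorem intervalIntegrable_velocity (hz : IsForcedTrajectoryOn L f z T) (ht : t ∈ Icc 0 T) :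
    IntervalIntegrable (fun s ↦ L (z s) + f s) volume 0 t :=
  (L.continuous.comp_continuousOn (hz.continuousOn_uIcc ht)).intervalIntegrable.add
    (hz.intervalIntegrable_forcing ht)

theorem sub (hz : IsForcedTrajectoryOn L f z T) (hy : IsForcedTrajectoryOn L g y T) :
    IsForcedTrajectoryOn L (f - g) (fun t ↦ z t - y t) T where
  continuousOn := hz.continuousOn.sub hy.continuousOn
  integrableOn := hz.integrableOn.sub hy.integrableOn
  eq_add_integral t ht := by
    calc z t - y t
        = (z 0 - y 0) + ((∫ s in (0 : ℝ)..t, (L (z s) + f s)) -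
            ∫ s in (0 : ℝ)..t, (L (y s) + g s)) := by
          rw [hz.eq_add_integral t ht, hy.eq_add_integral t ht, add_sub_add_comm]
      _ = (z 0 - y 0) + ∫ s in (0 : ℝ)..t, (L (z s - y s) + (f - g) s) := by
          rw [← intervalIntegral.integral_sub (hz.intervalIntegrable_velocity ht)
            (hy.intervalIntegrable_velocity ht)]
          simp only [Pi.sub_apply, map_sub, add_sub_add_comm]

theorem norm_le (hz : IsForcedTrajectoryOn L f z T) (ht : t ∈ Icc 0 T) :
    ‖z t‖ ≤ (‖z 0‖ + ∫ s in Icc 0 T, ‖f s‖) * Real.exp (‖L‖ * t) := by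
  suffices ∀ t ∈ Icc 0 T,
      ‖z t‖ ≤ (‖z 0‖ + ∫ s in Icc 0 T, ‖f s‖) + ‖L‖ * ∫ s in (0 : ℝ)..t, ‖z s‖ by
    simpa only [sub_zero] using
      le_mul_exp_of_le_add_mul_integral (norm_nonneg L) hz.continuousOn.norm this t ht
  intro t ht
  have z_int := (hz.continuousOn_uIcc ht).norm.intervalIntegrable (μ := volume)
  have f_int := (hz.intervalIntegrable_forcing ht).norm
  have forcing_le : ∫ s in (0 : ℝ)..t, ‖f s‖ ≤ ∫ s in Icc 0 T, ‖f s‖ := by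
    rw [intervalIntegral.integral_of_le ht.1]
    exact setIntegral_mono_set hz.integrableOn.norm (.of_forall fun _ ↦ norm_nonneg _)
      (Ioc_subset_Icc_self.trans (Icc_subset_Icc_right ht.2)).eventuallyLE
  have velocity_le : ‖∫ s in (0 : ℝ)..t, (L (z s) + f s)‖ ≤
      ∫ s in (0 : ℝ)..t, (‖L‖ * ‖z s‖ + ‖f s‖) :=
    intervalIntegral.norm_integral_le_of_norm_le ht.1
      (.of_forall fun s _ ↦ norm_add_le_of_le (L.le_opNorm _) le_rfl)
      ((z_int.const_mul _).add f_int)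
  calc ‖z t‖ = ‖z 0 + ∫ s in (0 : ℝ)..t, (L (z s) + f s)‖ := by rw [← hz.eq_add_integral t ht]
    _ ≤ ‖z 0‖ + ∫ s in (0 : ℝ)..t, (‖L‖ * ‖z s‖ + ‖f s‖) := norm_add_le_of_le le_rfl velocity_le
    _ = ‖z 0‖ + (‖L‖ * (∫ s in (0 : ℝ)..t, ‖z s‖) + ∫ s in (0 : ℝ)..t, ‖f s‖) := by
      rw [intervalIntegral.integral_add (z_int.const_mul _) f_int,
        intervalIntegral.integral_const_mul]
    _ ≤ _ := by linarith

theorem integral_norm_le (hz : IsForcedTrajectoryOn L f z T) (hT : 0 ≤ T) :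
    ∫ t in Icc 0 T, ‖z t‖ ≤ T * Real.exp (‖L‖ * T) * (‖z 0‖ + ∫ t in Icc 0 T, ‖f t‖) := by
  have pointwise : ∀ t ∈ Icc 0 T,
      ‖z t‖ ≤ (‖z 0‖ + ∫ s in Icc 0 T, ‖f s‖) * Real.exp (‖L‖ * T) := fun t ht ↦
    (hz.norm_le ht).trans <| by gcongr; exact ht.2
  calc ∫ t in Icc 0 T, ‖z t‖
      ≤ ∫ _ in Icc 0 T, (‖z 0‖ + ∫ s in Icc 0 T, ‖f s‖) * Real.exp (‖L‖ * T) :=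
        setIntegral_mono_on hz.continuousOn.norm.integrableOn_Icc
          (integrableOn_const measure_Icc_lt_top.ne) measurableSet_Icc pointwise
    _ = T * Real.exp (‖L‖ * T) * (‖z 0‖ + ∫ t in Icc 0 T, ‖f t‖) := by
        rw [setIntegral_const, Real.volume_real_Icc_of_le hT, sub_zero, smul_eq_mul]
        ring

end IsForcedTrajectoryOn

section FreeMotion

variable [CompleteSpace E]

theorem hasDerivAt_exp_smul_apply (L : E →L[ℝ] E) (v : E) (t : ℝ) :
    HasDerivAt (fun s : ℝ ↦ exp (s • L) v) (L (exp (t • L) v)) t :=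
  (hasDerivAt_exp_smul_const' L t).clm_apply (hasDerivAt_const t v) |>.congr_deriv <| by simp

theorem continuous_exp_smul_apply (L : E →L[ℝ] E) (v : E) :
    Continuous fun t : ℝ ↦ exp (t • L) v :=
  continuous_iff_continuousAt.2 fun t ↦ (hasDerivAt_exp_smul_apply L v t).continuousAt

theorem exp_apply_eq_zero_iff {v : E} : exp L v = 0 ↔ v = 0 := by
  let _ : NormedAlgebra ℚ (E →L[ℝ] E) := NormedAlgebra.restrictScalars ℚ ℝ _
  have := (ContinuousLinearMap.isUnit_iff_bijective.1 (NormedSpace.isUnit_exp L)).injective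
  exact map_eq_zero_iff _ this

theorem isForcedTrajectoryOn_exp_smul (L : E →L[ℝ] E) (v : E) (T : ℝ) :
    IsForcedTrajectoryOn L 0 (fun t ↦ exp (t • L) v) T where
  continuousOn := (continuous_exp_smul_apply L v).continuousOn
  integrableOn := integrableOn_zero
  eq_add_integral t _ := by
    simp only [Pi.zero_apply, add_zero]
    rw [intervalIntegral.integral_eq_sub_of_hasDerivAt
      (fun s _ ↦ hasDerivAt_exp_smul_apply L v s)
      ((L.continuous.comp (continuous_exp_smul_apply L v)).intervalIntegrable _ _)]
    abel

theorem apply_pow_exp_smul_eq_zero {v : E} {U : Set ℝ} (hU : IsOpen U)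
    (h : ∀ t ∈ U, C (exp (t • L) v) = 0) (k : ℕ) :
    ∀ t ∈ U, C ((L ^ k) (exp (t • L) v)) = 0 := by
  induction k with
  | zero => simpa using h
  | succ k ih =>
    intro t ht
    have deriv_eq : HasDerivAt (fun s : ℝ ↦ C ((L ^ k) (exp (s • L) v)))
        (C ((L ^ k) (L (exp (t • L) v)))) t :=
      (C ∘L L ^ k).hasFDerivAt.comp_hasDerivAt t (hasDerivAt_exp_smul_apply L v t)
    have eventually_zero : (fun s : ℝ ↦ C ((L ^ k) (exp (s • L) v))) =ᶠ[𝓝 t] 0 :=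
      Filter.eventually_of_mem (hU.mem_nhds ht) ih
    rw [pow_succ]
    exact deriv_eq.unique ((hasDerivAt_const t 0).congr_of_eventuallyEq eventually_zero)

theorem IsObservable.eq_zero_of_output_eq_zero (hobs : IsObservable L C) {v : E} {U : Set ℝ}
    (hU : IsOpen U) (hne : U.Nonempty) (h : ∀ t ∈ U, C (exp (t • L) v) = 0) :
    v = 0 := by
  obtain ⟨t, ht⟩ := hne
  exact exp_apply_eq_zero_iff.1 (hobs _ fun k ↦ apply_pow_exp_smul_eq_zero hU h k t ht)

theorem continuous_output (L : E →L[ℝ] E) (C : E →L[ℝ] F) (v : E) :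
    Continuous fun t : ℝ ↦ C (exp (t • L) v) :=
  C.continuous.comp (continuous_exp_smul_apply L v)

theorem integrable_output (L : E →L[ℝ] E) (C : E →L[ℝ] F) (T : ℝ) (v : E) :
    Integrable (fun t : ℝ ↦ C (exp (t • L) v)) (volume.restrict (Icc 0 T)) :=
  (continuous_output L C v).integrableOn_Icc

/-- The observation map of control theory: it sends an initial state to the output on `[0, T]` of
the free motion that starts there. Its codomain is `L¹`, so that its norm is the integral appearing
in the observability estimate. -/
noncomputable def observationMap (L : E →L[ℝ] E) (C : E →L[ℝ] F) (T : ℝ) :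
    E →ₗ[ℝ] (ℝ →₁[volume.restrict (Icc 0 T)] F) where
  toFun v := (integrable_output L C T v).toL1
  map_add' v w := by
    simp only [map_add]
    exact Integrable.toL1_add _ _ (integrable_output L C T v) (integrable_output L C T w)
  map_smul' r v := by
    simp only [map_smul]
    exact Integrable.toL1_smul _ (integrable_output L C T v) r

theorem norm_observationMap (L : E →L[ℝ] E) (C : E →L[ℝ] F) (T : ℝ) (v : E) :
    ‖observationMap L C T v‖ = ∫ t in Icc 0 T, ‖C (exp (t • L) v)‖ :=
  L1.norm_of_fun_eq_integral_norm (integrable_output L C T v)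

theorem IsObservable.ker_observationMap (hobs : IsObservable L C) {T : ℝ} (hT : 0 < T) :
    LinearMap.ker (observationMap L C T) = ⊥ := by
  refine LinearMap.ker_eq_bot'.2 fun v hv ↦ ?_
  have output_ae : (fun t : ℝ ↦ C (exp (t • L) v))
      =ᵐ[volume.restrict (Icc 0 T)] fun _ ↦ 0 :=
    (Integrable.toL1_eq_toL1_iff _ _ (integrable_output L C T v) (integrable_zero _ _ _)).1 hv
  have output_eqOn := Measure.eqOn_Icc_of_ae_eq volume hT.ne output_ae
    (continuous_output L C v).continuousOn continuousOn_const
  exact hobs.eq_zero_of_output_eq_zero isOpen_Ioo (nonempty_Ioo.2 hT)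
    fun t ht ↦ output_eqOn (Ioo_subset_Icc_self ht)

namespace IsForcedTrajectoryOn

variable {f z : ℝ → E} {T : ℝ}

theorem sub_free (hz : IsForcedTrajectoryOn L f z T) :
    IsForcedTrajectoryOn L f (fun t ↦ z t - exp (t • L) (z 0)) T := by
  simpa only [sub_zero] using hz.sub (isForcedTrajectoryOn_exp_smul L (z 0) T)

theorem integral_norm_sub_free_le (hz : IsForcedTrajectoryOn L f z T) (hT : 0 ≤ T) :
    ∫ t in Icc 0 T, ‖z t - exp (t • L) (z 0)‖ ≤
      T * Real.exp (‖L‖ * T) * ∫ t in Icc 0 T, ‖f t‖ := by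
  simpa using hz.sub_free.integral_norm_le hT

theorem integral_norm_free_output_le (hz : IsForcedTrajectoryOn L f z T) (C : E →L[ℝ] F)
    (hT : 0 ≤ T) :
    ∫ t in Icc 0 T, ‖C (exp (t • L) (z 0))‖ ≤
      (∫ t in Icc 0 T, ‖C (z t)‖) +
        ‖C‖ * (T * Real.exp (‖L‖ * T)) * ∫ t in Icc 0 T, ‖f t‖ := by
  have output_int : IntegrableOn (fun t ↦ ‖C (z t)‖) (Icc 0 T) :=
    (C.continuous.comp_continuousOn hz.continuousOn).norm.integrableOn_Icc
  have deviation_int : IntegrableOn (fun t ↦ ‖C‖ * ‖z t - exp (t • L) (z 0)‖) (Icc 0 T) :=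
    hz.sub_free.continuousOn.norm.integrableOn_Icc.const_mul ‖C‖
  have pointwise (t : ℝ) :
      ‖C (exp (t • L) (z 0))‖ ≤ ‖C (z t)‖ + ‖C‖ * ‖z t - exp (t • L) (z 0)‖ :=
    calc ‖C (exp (t • L) (z 0))‖ = ‖C (z t) - C (z t - exp (t • L) (z 0))‖ := by
          rw [map_sub, sub_sub_cancel]
      _ ≤ _ := norm_sub_le_of_le le_rfl (C.le_opNorm _)
  calc ∫ t in Icc 0 T, ‖C (exp (t • L) (z 0))‖
      ≤ ∫ t in Icc 0 T, (‖C (z t)‖ + ‖C‖ * ‖z t - exp (t • L) (z 0)‖) :=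
        integral_mono (integrable_output L C T (z 0)).norm (output_int.add deviation_int) pointwise
    _ = (∫ t in Icc 0 T, ‖C (z t)‖) + ‖C‖ * ∫ t in Icc 0 T, ‖z t - exp (t • L) (z 0)‖ := by
        rw [integral_add output_int deviation_int, integral_const_mul]
    _ ≤ _ := by
        rw [mul_assoc]
        gcongr
        exact hz.integral_norm_sub_free_le hT

end IsForcedTrajectoryOn

end FreeMotion

variable [FiniteDimensional ℝ E] {T : ℝ}

theorem IsObservable.exists_norm_le_mul_integral_output (hobs : IsObservable L C) (hT : 0 < T) :
    ∃ K > 0, ∀ v : E, ‖v‖ ≤ K * ∫ t in Icc 0 T, ‖C (exp (t • L) v)‖ := by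
  have : CompleteSpace E := FiniteDimensional.complete ℝ E
  obtain ⟨K, K_pos, hK⟩ :=
    (observationMap L C T).exists_antilipschitzWith (hobs.ker_observationMap hT)
  refine ⟨K, K_pos, fun v ↦ ?_⟩
  simpa only [norm_observationMap] using hK.le_mul_norm (map_zero _) v

theorem IsObservable.exists_norm_initial_le (hobs : IsObservable L C) (hT : 0 < T) :
    ∃ K > 0, ∀ {f z : ℝ → E}, IsForcedTrajectoryOn L f z T →
      ‖z 0‖ ≤ K * ((∫ t in Icc 0 T, ‖C (z t)‖) + ∫ t in Icc 0 T, ‖f t‖) := by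
  have : CompleteSpace E := FiniteDimensional.complete ℝ E
  obtain ⟨K, K_pos, hK⟩ := hobs.exists_norm_le_mul_integral_output hT
  set M := ‖C‖ * (T * Real.exp (‖L‖ * T))
  have M_nonneg : 0 ≤ M := by positivity
  refine ⟨K * (1 + M), by positivity, fun {f z} hz ↦ ?_⟩
  set J := ∫ t in Icc 0 T, ‖C (z t)‖
  set I := ∫ t in Icc 0 T, ‖f t‖
  have J_nonneg : 0 ≤ J := integral_nonneg fun _ ↦ norm_nonneg _
  have I_nonneg : 0 ≤ I := integral_nonneg fun _ ↦ norm_nonneg _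
  calc ‖z 0‖ ≤ K * ∫ t in Icc 0 T, ‖C (exp (t • L) (z 0))‖ := hK (z 0)
    _ ≤ K * (J + M * I) := by gcongr; exact hz.integral_norm_free_output_le C hT.le
    _ ≤ K * ((1 + M) * J + (1 + M) * I) := by
      refine mul_le_mul_of_nonneg_left (add_le_add ?_ ?_) K_pos.le
      · exact le_mul_of_one_le_left J_nonneg (by linarith)
      · exact mul_le_mul_of_nonneg_right (by linarith) I_nonneg
    _ = K * (1 + M) * (J + I) := by ring

theorem IsObservable.exists_integral_norm_le (hobs : IsObservable L C) (hT : 0 < T) :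
    ∃ c > 0, ∀ {f z : ℝ → E}, IsForcedTrajectoryOn L f z T →
      ∫ t in Icc 0 T, ‖z t‖ ≤
        c * ((∫ t in Icc 0 T, ‖C (z t)‖) + ∫ t in Icc 0 T, ‖f t‖) := by
  obtain ⟨K, K_pos, hK⟩ := hobs.exists_norm_initial_le hT
  set G := T * Real.exp (‖L‖ * T)
  have G_pos : 0 < G := by positivity
  refine ⟨G * (K + 1), mul_pos G_pos (by positivity), fun {f z} hz ↦ ?_⟩
  set J := ∫ t in Icc 0 T, ‖C (z t)‖
  set I := ∫ t in Icc 0 T, ‖f t‖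
  have J_nonneg : 0 ≤ J := integral_nonneg fun _ ↦ norm_nonneg _
  calc ∫ t in Icc 0 T, ‖z t‖ ≤ G * (‖z 0‖ + I) := hz.integral_norm_le hT.le
    _ ≤ G * (K * (J + I) + (J + I)) := by gcongr; exacts [hK hz, le_add_of_nonneg_left J_nonneg]
    _ = G * (K + 1) * (J + I) := by ring

theorem observability_estimate_via_smoothing_general (hobs : IsObservable L C) (hT : 0 < T) :
    ∃ c > 0, ∀ {f z φ : ℝ → E}, IsForcedTrajectoryOn L f z T → IntegrableOn φ (Icc 0 T) →
      ∫ t in Icc 0 T, ‖z t‖ ≤ c * ((∫ t in Icc 0 T, ‖C (z t)‖) +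
        (∫ t in Icc 0 T, ‖f t - φ t‖) + ∫ t in Icc 0 T, ‖φ t‖) := by
  obtain ⟨c, c_pos, hc⟩ := hobs.exists_integral_norm_le hT
  refine ⟨c, c_pos, fun {f z φ} hz hφ ↦ (hc hz).trans ?_⟩
  rw [add_assoc]
  gcongr
  exact integral_norm_le_integral_norm_sub_add hz.integrableOn hφ

end LinearSystem

theorem CompletelyObservable.isObservable {n m : ℕ} {A : Matrix (Fin n) (Fin n) ℝ}
    {C : Matrix (Fin m) (Fin n) ℝ} (hobs : CompletelyObservable n m A C) :
    IsObservable (Matrix.toEuclideanCLM (𝕜 := ℝ) A)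
      (Matrix.toEuclideanLin C).toContinuousLinearMap := by
  intro v hv
  suffices v.ofLp = 0 by simpa using this
  refine hobs v.ofLp fun k _ ↦ ?_
  rw [← Matrix.mulVec_mulVec, ← Matrix.ofLp_toEuclideanCLM, map_pow]
  exact congrArg WithLp.ofLp (hv k)

/-- **Estimate via smoothed perturbation.**
If `(A, C)` is completely observable, there is `c > 0` such that for every
absolutely continuous `z : [0,1] → ℝⁿ` with integrable `f = ż − A z`, and every
`φ ∈ W^{n,1}([0,1], ℝⁿ)` — encoded by the chain `Φ` of its derivatives with
`Φ 0 = φ` — one has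
`∫₀¹ ‖z‖ ≤ c (∫₀¹ ‖C z‖ + ∫₀¹ ‖f − φ‖ + |φ|ₙ)` with
`|φ|ₙ = Σ_{j=0}^{n} ∫₀¹ ‖φ^{(j)}‖`. -/
theorem observability_estimate_via_smoothing
    (n m : ℕ) (A : Matrix (Fin n) (Fin n) ℝ) (C : Matrix (Fin m) (Fin n) ℝ)
    (hobs : CompletelyObservable n m A C) :
    ∃ c > 0, ∀ (z f : ℝ → EuclideanSpace ℝ (Fin n))
        (Φ : ℕ → ℝ → EuclideanSpace ℝ (Fin n)),
      ContinuousOn z (Set.Icc 0 1) →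
      IntegrableOn f (Set.Icc 0 1) →
      (∀ t ∈ Set.Icc (0:ℝ) 1,
        z t = z 0 + ∫ s in (0:ℝ)..t, (Matrix.toEuclideanLin A (z s) + f s)) →
      (∀ j < n, ContinuousOn (Φ j) (Set.Icc 0 1)) →
      (∀ j ≤ n, IntegrableOn (Φ j) (Set.Icc 0 1)) →
      (∀ j < n, ∀ t ∈ Set.Icc (0:ℝ) 1, Φ j t = Φ j 0 + ∫ s in (0:ℝ)..t, Φ (j + 1) s) →
      (∫ t in Set.Icc (0:ℝ) 1, ‖z t‖) ≤
        c * ((∫ t in Set.Icc (0:ℝ) 1, ‖Matrix.toEuclideanLin C (z t)‖) +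
             (∫ t in Set.Icc (0:ℝ) 1, ‖f t - Φ 0 t‖) +
             ∑ j ∈ Finset.range (n + 1), ∫ t in Set.Icc (0:ℝ) 1, ‖Φ j t‖) := by
  obtain ⟨c, c_pos, hc⟩ :=
    observability_estimate_via_smoothing_general hobs.isObservable zero_lt_one
  refine ⟨c, c_pos, fun z f Φ hz hf hzf _ hΦ _ ↦ (hc ⟨hz, hf, hzf⟩ (hΦ 0 n.zero_le)).trans ?_⟩
  refine mul_le_mul_of_nonneg_left (add_le_add le_rfl ?_) c_pos.le
  exact Finset.single_le_sum (f := fun j ↦ ∫ t in Icc (0 : ℝ) 1, ‖Φ j t‖)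
    (fun _ _ ↦ integral_nonneg fun _ ↦ norm_nonneg _) (Finset.mem_range.2 n.succ_pos)
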